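/- (Energy conservation at the continuous level, eqs. (7)–(8) of the paper.) Let m ≥ 1, d = 2m, let J ∈ ℝ^{d×d} be skew-symmetric, let H : ℝ^d → ℝ be C¹, let h > 0, s ≥ 1, and let η₀, …, η_{s−1} ∈ ℝ be arbitrary. Suppose σ : [0, h] → ℝ^d is a C¹ curve satisfying σ'(ch) = Σ_{j=0}^{s−1} P_j(c) γ_j for all c ∈ [0,1], where γ_j = η_j · J ∫₀¹ P_j(τ) ∇H(σ(τh)) dτ for j = 0, …, s−1. Then H(σ(h)) = H(σ(0)). -/

import Mathlib

open MeasureTheory Polynomial Matrix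

/-- The shifted Legendre polynomial `P j`, orthonormal on `[0,1]`. -/
noncomputable def legP (j : ℕ) : ℝ → ℝ := fun x =>
  (Real.sqrt (2 * j + 1) / (Nat.factorial j)) *
    (Polynomial.derivative^[j] ((Polynomial.X ^ 2 - Polynomial.X) ^ j)).eval x

theorem legP_cont (j : ℕ) : Continuous (legP j) := by
  unfold legP
  exact continuous_const.mul (Polynomial.continuous _)

theorem skew_inner {n : ℕ} (J : Matrix (Fin n) (Fin n) ℝ) (hJ : Jᵀ = -J)
    (v : EuclideanSpace ℝ (Fin n)) : inner ℝ v (Matrix.toEuclideanLin J v) = 0 := by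
  have h1 : inner ℝ v (Matrix.toEuclideanLin J v) = (J *ᵥ v.ofLp) ⬝ᵥ v.ofLp := by
    simp [EuclideanSpace.inner_eq_star_dotProduct, Matrix.toLpLin_apply]
  have h2 : (J *ᵥ v.ofLp) ⬝ᵥ v.ofLp = -((J *ᵥ v.ofLp) ⬝ᵥ v.ofLp) := by
    conv_lhs => rw [dotProduct_comm, Matrix.dotProduct_mulVec, ← Matrix.mulVec_transpose, hJ,
      Matrix.neg_mulVec, neg_dotProduct]
  rw [h1]; linarith

/-- energy conservation at the continuous level, eqs. (7)–(8).  If `J` is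
skew-symmetric, `H` is `C¹`, and `σ : [0,h] → ℝ^d` satisfies
`σ'(ch) = ∑_{j<s} P_j(c) γ_j` with `γ_j = η_j J ∫₀¹ P_j(τ) ∇H(σ(τh)) dτ`, then
`H(σ(h)) = H(σ(0))`, for any choice of the constants `η_j`. -/
theorem stmt7 (m : ℕ) (hm : 1 ≤ m)
    (J : Matrix (Fin (2 * m)) (Fin (2 * m)) ℝ) (hJ : Jᵀ = -J)
    (H : EuclideanSpace ℝ (Fin (2 * m)) → ℝ) (hH : ContDiff ℝ 1 H)
    (h : ℝ) (hh : 0 < h) (s : ℕ) (hs : 1 ≤ s)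
    (η : ℕ → ℝ)
    (σ : ℝ → EuclideanSpace ℝ (Fin (2 * m)))
    (hσ' : ∀ c ∈ Set.Icc (0:ℝ) 1,
      HasDerivAt σ
        (∑ j ∈ Finset.range s, legP j c •
          (η j • Matrix.toEuclideanLin J
            (∫ τ in (0:ℝ)..1, legP j τ • gradient H (σ (τ * h)))))
        (c * h)) :
    H (σ h) = H (σ 0) := by
  set g : ℝ → EuclideanSpace ℝ (Fin (2 * m)) := fun c => gradient H (σ (c * h)) with hg
  set G : ℕ → EuclideanSpace ℝ (Fin (2 * m)) := fun j => ∫ τ in (0:ℝ)..1, legP j τ • g τ with hG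
  have hgradc : Continuous (gradient H) := by
    unfold gradient
    exact (LinearIsometryEquiv.continuous _).comp (hH.continuous_fderiv one_ne_zero)
  have hσc : ∀ c ∈ Set.Icc (0:ℝ) 1, HasDerivAt (fun c => σ (c * h))
      (h • ∑ j ∈ Finset.range s, legP j c • (η j • Matrix.toEuclideanLin J (G j))) c := by
    intro c hc
    exact HasDerivAt.scomp c (hσ' c hc) (by simpa using (hasDerivAt_id c).mul_const h)
  have hgc : ContinuousOn g (Set.Icc 0 1) := fun c hc =>
    (hgradc.continuousAt.comp (f := fun c => σ (c * h))
      (hσc c hc).continuousAt).continuousWithinAt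
  have hPg : ∀ j, ContinuousOn (fun c => legP j c • g c) (Set.Icc 0 1) := fun j =>
    (legP_cont j).continuousOn.smul hgc
  have hder : ∀ c ∈ Set.Icc (0:ℝ) 1, HasDerivAt (fun c => H (σ (c * h)))
      (∑ j ∈ Finset.range s,
        (h * η j) * inner ℝ (Matrix.toEuclideanLin J (G j)) (legP j c • g c)) c := by
    intro c hc
    have hd : HasGradientAt H (g c) (σ (c * h)) :=
      ((hH.differentiable one_ne_zero) _).hasGradientAt
    have := hd.hasFDerivAt.comp_hasDerivAt c (hσc c hc)
    refine this.congr_deriv ?_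
    simp only [InnerProductSpace.toDual_apply_apply, inner_smul_right, inner_sum, Finset.mul_sum]
    refine Finset.sum_congr rfl fun j _ => ?_
    rw [real_inner_comm]
    ring
  have hci : ∀ j, ContinuousOn (fun c => (h * η j) *
      inner ℝ (Matrix.toEuclideanLin J (G j)) (legP j c • g c)) (Set.Icc 0 1) := fun j =>
    continuousOn_const.mul (continuousOn_const.inner (𝕜 := ℝ) (hPg j))
  have hii : ∀ j, IntervalIntegrable (fun c => (h * η j) *
      inner ℝ (Matrix.toEuclideanLin J (G j)) (legP j c • g c)) volume 0 1 := fun j =>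
    ContinuousOn.intervalIntegrable (by rw [Set.uIcc_of_le zero_le_one]; exact hci j)
  have hint : IntervalIntegrable (fun c => ∑ j ∈ Finset.range s,
        (h * η j) * inner ℝ (Matrix.toEuclideanLin J (G j)) (legP j c • g c)) volume 0 1 :=
    ContinuousOn.intervalIntegrable (by
      rw [Set.uIcc_of_le zero_le_one]; exact continuousOn_finsetSum _ fun j _ => hci j)
  have key := intervalIntegral.integral_eq_sub_of_hasDerivAt
    (fun c hc => hder c (by rwa [Set.uIcc_of_le zero_le_one] at hc)) hint
  rw [intervalIntegral.integral_finsetSum (fun j _ => hii j)] at key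
  have hz : ∀ j, ∫ c in (0:ℝ)..1, (h * η j) *
      inner ℝ (Matrix.toEuclideanLin J (G j)) (legP j c • g c) = 0 := by
    intro j
    have hI : IntervalIntegrable (fun c => legP j c • g c) volume 0 1 :=
      ContinuousOn.intervalIntegrable (by rw [Set.uIcc_of_le zero_le_one]; exact hPg j)
    have e := (innerSL ℝ (Matrix.toEuclideanLin J (G j))).intervalIntegral_comp_comm hI
    simp only [innerSL_apply_apply] at e
    rw [intervalIntegral.integral_const_mul, e]
    change h * η j * inner ℝ (Matrix.toEuclideanLin J (G j)) (G j) = 0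
    rw [real_inner_comm, skew_inner J hJ, mul_zero]
  rw [Finset.sum_eq_zero (fun j _ => hz j)] at key
  simp only [one_mul, zero_mul] at key
  linarith
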